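/- arXiv:2201.00816 — 4 statements merged into one kernel-verified Lean document; each statement's English description precedes it below -/
import Mathlib

section
/- Let n ≥ 1 and let Ω ⊆ ℍ^n. Suppose there exist a point ξ₀ ∈ Ω, an open set U ⊆ ℝ^{2n}, a continuous function f : U → ℝ, and an open set W ⊆ ℍ^n containing ξ₀ such that Ω ∩ W = {(x, y, f(x,y)) : (x,y) ∈ U} (i.e., a neighbourhood of ξ₀ in Ω is the graph of a continuous function over the z-plane). Then Ω is not geodetically convex. -/
open MeasureTheory Set Real
open scoped ENNReal NNReal

noncomputable section

/-- Points of the Heisenberg group `ℍⁿ`, written `(x, y, t)` with `x, y ∈ ℝⁿ`, `t ∈ ℝ`. -/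
abbrev Hpt (n : ℕ) : Type := (Fin n → ℝ) × (Fin n → ℝ) × ℝ

/-- The projection of a point of `ℍⁿ` onto the horizontal `z = (x,y)` plane, viewed as a
point of the Euclidean space `ℝ^{2n}` (so that lengths are Euclidean lengths). -/
def hproj {n : ℕ} (p : Hpt n) : EuclideanSpace ℝ (Fin n ⊕ Fin n) :=
  (WithLp.equiv 2 ((Fin n ⊕ Fin n) → ℝ)).symm (Sum.elim p.1 p.2.1)

/-- A curve `γ` is a horizontal curve on `[a,b]` if it is (absolutely continuous, here:
Lipschitz) and almost everywhere it has a derivative `γ' = (x', y', t')` satisfying the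
horizontality condition `t' = 2 ∑ⱼ (xⱼ' yⱼ - yⱼ' xⱼ)`. -/
def IsHorizontal {n : ℕ} (γ : ℝ → Hpt n) (a b : ℝ) : Prop :=
  a ≤ b ∧ (∃ K : NNReal, LipschitzOnWith K γ (Icc a b)) ∧
    ∃ γ' : ℝ → Hpt n,
      (∀ᵐ s ∂(volume.restrict (Icc a b)), HasDerivAt γ (γ' s) s) ∧
      (∀ᵐ s ∂(volume.restrict (Icc a b)),
        (γ' s).2.2 = 2 * ∑ j, ((γ' s).1 j * (γ s).2.1 j - (γ' s).2.1 j * (γ s).1 j))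

/-- The length of a horizontal curve on `[a,b]`: the Euclidean length (total variation)
of its projection to the `z`-plane `ℝ^{2n}`. -/
def hLength {n : ℕ} (γ : ℝ → Hpt n) (a b : ℝ) : ℝ≥0∞ :=
  eVariationOn (fun s => hproj (γ s)) (Icc a b)

/-- The Carnot–Carathéodory distance: the infimum of lengths of horizontal curves
joining `p` to `q`. -/
def ccDist {n : ℕ} (p q : Hpt n) : ℝ≥0∞ :=
  ⨅ (γ : ℝ → Hpt n) (a : ℝ) (b : ℝ) (_ : IsHorizontal γ a b)
    (_ : γ a = p) (_ : γ b = q), hLength γ a b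

/-- `γ` is a geodesic on `[a,b]`: a horizontal curve whose length equals the
Carnot–Carathéodory distance between its endpoints. -/
def IsGeodesicOn {n : ℕ} (γ : ℝ → Hpt n) (a b : ℝ) : Prop :=
  IsHorizontal γ a b ∧ hLength γ a b = ccDist (γ a) (γ b)

/-- A set `A ⊆ ℍⁿ` is geodetically convex if every geodesic connecting any two points of
`A` lies in `A`. -/
def GeodConvexSet {n : ℕ} (A : Set (Hpt n)) : Prop :=
  ∀ p ∈ A, ∀ q ∈ A, ∀ (γ : ℝ → Hpt n) (a b : ℝ),
    IsGeodesicOn γ a b → γ a = p → γ b = q → ∀ s ∈ Icc a b, γ s ∈ A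

/-- A function `u : ℍⁿ → ℝ` is geodetically convex if its composition with every geodesic
is convex. -/
def GeodConvexFun {n : ℕ} (u : Hpt n → ℝ) : Prop :=
  ∀ (γ : ℝ → Hpt n) (a b : ℝ), IsGeodesicOn γ a b → ConvexOn ℝ (Icc a b) (u ∘ γ)

/-- The union of the images of all geodesics connecting pairs of points of `S`. -/
def geodJoin {n : ℕ} (S : Set (Hpt n)) : Set (Hpt n) :=
  {z | ∃ p ∈ S, ∃ q ∈ S, ∃ (γ : ℝ → Hpt n) (a b : ℝ),
    IsGeodesicOn γ a b ∧ γ a = p ∧ γ b = q ∧ z ∈ γ '' Icc a b}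

/-- The iterated geodesic hulls `G^m(A)`, with `G^0(A) = A`. -/
def Gm {n : ℕ} (A : Set (Hpt n)) : ℕ → Set (Hpt n)
  | 0 => A
  | (m + 1) => geodJoin (Gm A m)

lemma evar_lip {E : Type*} [PseudoEMetricSpace E] {f : ℝ → E} {K : ℝ≥0} {a b : ℝ}
    (hf : LipschitzOnWith K f (Icc a b)) :
    eVariationOn f (Icc a b) ≤ K * ENNReal.ofReal (b - a) := by
  have h1 := hf.comp_eVariationOn_le (g := (id : ℝ → ℝ)) (s := Icc a b) (fun x hx => hx)
  refine h1.trans ?_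
  gcongr
  by_cases hab : a ≤ b
  · have := (monotone_id (α := ℝ)).monotoneOn (Icc a b) |>.eVariationOn_eq (a := a) (b := b)
      ⟨le_rfl, hab⟩ ⟨hab, le_rfl⟩
    simp
  · rw [Icc_eq_empty hab]; simp

lemma hproj_dist_sq {n : ℕ} (p q : Hpt n) :
    dist (hproj p) (hproj q) ^ 2 = ∑ j, ((p.1 j - q.1 j) ^ 2 + (p.2.1 j - q.2.1 j) ^ 2) := by
  rw [EuclideanSpace.dist_eq, Real.sq_sqrt (by positivity), Fintype.sum_sum_type,
    Finset.sum_add_distrib]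
  simp [hproj, Real.dist_eq, sq_abs]

lemma hproj_lip {n : ℕ} : ∃ C : ℝ≥0, LipschitzWith C (hproj : Hpt n → _) := by
  let A : Hpt n →ₗ[ℝ] EuclideanSpace ℝ (Fin n ⊕ Fin n) :=
    { toFun := hproj
      map_add' := by
        intro p q; ext i; cases i <;> simp [hproj]
      map_smul' := by
        intro c q; ext i; cases i <;> simp [hproj] }
  exact ⟨_, (LinearMap.toContinuousLinearMap A).lipschitz⟩

lemma length_fun {n : ℕ} {γ : ℝ → Hpt n} {a b : ℝ}
    (hl : ∃ K : ℝ≥0, LipschitzOnWith K γ (Icc a b)) :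
    ∃ (ℓ : ℝ → ℝ) (C : ℝ≥0), ℓ a = 0 ∧ ENNReal.ofReal (ℓ b) = hLength γ a b ∧
      ∀ s s', a ≤ s → s ≤ s' → s' ≤ b →
        dist (hproj (γ s)) (hproj (γ s')) ≤ ℓ s' - ℓ s ∧ ℓ s' - ℓ s ≤ C * (s' - s) := by
  obtain ⟨K, hK⟩ := hl
  obtain ⟨C0, hC0⟩ := hproj_lip (n := n)
  set z : ℝ → EuclideanSpace ℝ (Fin n ⊕ Fin n) := fun s => hproj (γ s) with hz
  have hzl : LipschitzOnWith (C0 * K) z (Icc a b) := by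
    have := (hC0.lipschitzOnWith (s := univ)).comp hK (fun _ _ => mem_univ _)
    exact this
  have hfin : ∀ s s', a ≤ s → s' ≤ b → eVariationOn z (Icc s s') ≠ ⊤ := by
    intro s s' h1 h2
    have := evar_lip (hzl.mono (Icc_subset_Icc h1 h2))
    exact ne_top_of_le_ne_top (by finiteness) this
  refine ⟨fun s => (eVariationOn z (Icc a s)).toReal, C0 * K, by simp, ?_, ?_⟩
  · exact ENNReal.ofReal_toReal (hfin a b le_rfl le_rfl)
  · intro s s' h1 h2 h3
    have hadd := eVariationOn.Icc_add_Icc z (s := univ) h1 h2 (mem_univ _)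
    simp only [univ_inter] at hadd
    have hr : (eVariationOn z (Icc a s')).toReal - (eVariationOn z (Icc a s)).toReal
        = (eVariationOn z (Icc s s')).toReal := by
      rw [← hadd, ENNReal.toReal_add (hfin _ _ le_rfl (h2.trans h3)) (hfin _ _ h1 h3)]; ring
    simp only [hr]
    constructor
    · have := eVariationOn.edist_le z (s := Icc s s') (x := s) (y := s') ⟨le_rfl, h2⟩ ⟨h2, le_rfl⟩
      rw [dist_edist]
      exact ENNReal.toReal_mono (hfin _ _ h1 h3) this
    · have := evar_lip (hzl.mono (Icc_subset_Icc h1 h3))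
      have h := ENNReal.toReal_mono (by finiteness) this
      rwa [ENNReal.toReal_mul, ENNReal.toReal_ofReal (by linarith)] at h

lemma pt_ineq {n : ℕ} (X Y X' Y' : Fin n → ℝ) (v c sn k σ : ℝ) (hv : 0 ≤ v)
    (hvv : ∑ j, ((X' j) ^ 2 + (Y' j) ^ 2) ≤ v ^ 2) (hcs : c ^ 2 + sn ^ 2 = 1) (hsn : 0 < sn)
    (hk : 0 < k) (hσ : σ ^ 2 = 1) :
    -(k ^ 2 / sn ^ 2) * (∑ j, ((X j) ^ 2 + (Y j) ^ 2)) * v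
      + k * (c / sn) * (∑ j, (2 * X j * X' j + 2 * Y j * Y' j))
      + σ * k * (2 * ∑ j, (X' j * Y j - Y' j * X j)) ≤ v := by
  set N := ∑ j, ((X j) ^ 2 + (Y j) ^ 2) with hN
  have hN0 : 0 ≤ N := by positivity
  set D := ∑ j, (X' j * (c * X j + σ * sn * Y j) + Y' j * (c * Y j - σ * sn * X j)) with hD
  have hCS : D ^ 2 ≤ v ^ 2 * N := by
    have h := Finset.sum_mul_sq_le_sq_mul_sq Finset.univ (Sum.elim X' Y')
      (Sum.elim (fun j => c * X j + σ * sn * Y j) (fun j => c * Y j - σ * sn * X j))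
    simp only [Fintype.sum_sum_type, Sum.elim_inl, Sum.elim_inr, ← Finset.sum_add_distrib] at h
    have e : ∑ j, ((c * X j + σ * sn * Y j) ^ 2 + (c * Y j - σ * sn * X j) ^ 2) = N := by
      refine Finset.sum_congr rfl fun j _ => ?_
      have : (c * X j + σ * sn * Y j) ^ 2 + (c * Y j - σ * sn * X j) ^ 2
        = (c ^ 2 + σ ^ 2 * sn ^ 2) * (X j ^ 2 + Y j ^ 2) := by ring
      rw [this, hσ, one_mul, hcs, one_mul]
    rw [e] at h
    exact h.trans (by gcongr)
  have hDle : D ≤ v * √N := by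
    apply le_of_sq_le_sq _ (by positivity)
    rw [mul_pow, Real.sq_sqrt hN0]; exact hCS
  have e2 : k * (c / sn) * (∑ j, (2 * X j * X' j + 2 * Y j * Y' j))
      + σ * k * (2 * ∑ j, (X' j * Y j - Y' j * X j)) = 2 * (k / sn) * D := by
    rw [hD, Finset.mul_sum, Finset.mul_sum, Finset.mul_sum, Finset.mul_sum, ← Finset.sum_add_distrib]
    refine Finset.sum_congr rfl fun j _ => ?_
    field_simp
    ring
  have hw : 0 < k / sn := by positivity
  set w := k / sn with hwd
  have e3 : k ^ 2 / sn ^ 2 = w ^ 2 := by rw [hwd, div_pow]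
  rw [add_assoc, e2, e3]
  have hs := Real.sq_sqrt hN0
  have : w * D ≤ w * (v * √N) := by gcongr
  have e4 : -w ^ 2 * N * v = -w ^ 2 * (√N) ^ 2 * v := by rw [hs]
  rw [e4]
  nlinarith [mul_nonneg hv (sq_nonneg (w * √N - 1))]
lemma speed_le {n : ℕ} {γ : ℝ → Hpt n} {a b s : ℝ} {ℓ : ℝ → ℝ} (hs : s ∈ Ioo a b)
    (hℓ : ∀ s s', a ≤ s → s ≤ s' → s' ≤ b → dist (hproj (γ s)) (hproj (γ s')) ≤ ℓ s' - ℓ s)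
    {v : ℝ} (hv : HasDerivAt ℓ v s) {X' Y' : Fin n → ℝ}
    (hX : ∀ j, HasDerivAt (fun r => (γ r).1 j) (X' j) s)
    (hY : ∀ j, HasDerivAt (fun r => (γ r).2.1 j) (Y' j) s) :
    0 ≤ v ∧ ∑ j, ((X' j) ^ 2 + (Y' j) ^ 2) ≤ v ^ 2 := by
  have hv' := (hasDerivAt_iff_tendsto_slope.1 hv).mono_left (nhdsGT_le_nhdsNE s)
  have hX' := fun j => (hasDerivAt_iff_tendsto_slope.1 (hX j)).mono_left (nhdsGT_le_nhdsNE s)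
  have hY' := fun j => (hasDerivAt_iff_tendsto_slope.1 (hY j)).mono_left (nhdsGT_le_nhdsNE s)
  have hev : ∀ᶠ r in nhdsWithin s (Ioi s), r ∈ Ioo s b := Ioo_mem_nhdsGT hs.2
  constructor
  · refine ge_of_tendsto hv' ?_
    filter_upwards [hev] with r hr
    rw [slope_def_field]
    have := (dist_nonneg).trans (hℓ s r hs.1.le hr.1.le hr.2.le)
    have h2 := hr.1
    apply div_nonneg this (by linarith)
  · refine le_of_tendsto_of_tendsto (tendsto_finsetSum Finset.univ
      (fun j _ => ((hX' j).pow 2).add ((hY' j).pow 2))) (hv'.pow 2) ?_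
    filter_upwards [hev] with r hr
    have h1 := hℓ s r hs.1.le hr.1.le hr.2.le
    have h2 := hr.1
    have h3 : 0 < r - s := by linarith
    simp only [slope_def_field, div_pow, ← add_div, ← Finset.sum_div]
    gcongr
    calc _ = dist (hproj (γ r)) (hproj (γ s)) ^ 2 := (hproj_dist_sq _ _).symm
      _ ≤ _ := by rw [dist_comm]; gcongr

lemma hasDerivAt_cot {θ : ℝ} (h : sin θ ≠ 0) :
    HasDerivAt (fun x => cos x / sin x) (-(1 / sin θ ^ 2)) θ := by
  refine ((Real.hasDerivAt_cos θ).fun_div (Real.hasDerivAt_sin θ) h).congr_deriv ?_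
  rw [← Real.sin_sq_add_cos_sq θ]; ring

lemma ac_le {g : ℝ → ℝ} {a b : ℝ} (hab : a ≤ b) (hg : AbsolutelyContinuousOnInterval g a b)
    (h : ∀ᵐ s, s ∈ Ioo a b → deriv g s ≤ 0) : g b ≤ g a := by
  have h1 := hg.integral_deriv_eq_sub
  have h2 : ∫ x in a..b, deriv g x ≤ 0 := by
    rw [intervalIntegral.integral_of_le hab, integral_Ioc_eq_integral_Ioo]
    apply integral_nonpos_of_ae
    exact (ae_restrict_iff' measurableSet_Ioo).2 h
  linarith

lemma core {n : ℕ} {γ : ℝ → Hpt n} {a b : ℝ} (hγ : IsHorizontal γ a b) {φ L σ : ℝ}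
    (hφ0 : 0 < φ) (hφ : φ < π) (hL : 0 < L) (hσ : σ ^ 2 = 1)
    (h : L ^ 2 / φ ≤ cos φ / sin φ *
        (∑ j, (((γ b).1 j - (γ a).1 j) ^ 2 + ((γ b).2.1 j - (γ a).2.1 j) ^ 2))
      + σ * ((γ b).2.2 - (γ a).2.2
        - 2 * ∑ j, ((γ b).1 j * (γ a).2.1 j - (γ b).2.1 j * (γ a).1 j))) :
    ENNReal.ofReal L ≤ hLength γ a b := by
  obtain ⟨hab, hlip, γ', hd, hh⟩ := hγ
  obtain ⟨ℓ, C, hℓa, hℓb, hℓ⟩ := length_fun hlip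
  obtain ⟨K, hK⟩ := hlip
  rw [← hℓb]
  by_contra hcon
  have hlt : ℓ b < L := by
    by_contra h'; exact hcon (ENNReal.ofReal_le_ofReal (not_lt.1 h'))
  set k := φ / L with hk
  have hk0 : 0 < k := by positivity
  have hmono : ∀ s s', a ≤ s → s ≤ s' → s' ≤ b → ℓ s ≤ ℓ s' := by
    intro s s' h1 h2 h3
    have := dist_nonneg.trans (hℓ s s' h1 h2 h3).1
    linarith
  set ε := φ - k * ℓ b with hε
  have hε0 : 0 < ε := by
    have : k * ℓ b < k * L := by gcongr
    have e : k * L = φ := by rw [hk]; field_simp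
    linarith
  set θ : ℝ → ℝ := fun s => k * ℓ s + ε with hθ
  have hθmem : ∀ s ∈ Icc a b, θ s ∈ Icc ε φ := by
    intro s hs
    have h1 := hmono a s le_rfl hs.1 hs.2
    have h2 := hmono s b hs.1 hs.2 le_rfl
    have h3 : k * ℓ s ≤ k * ℓ b := by gcongr
    have h4 : 0 ≤ k * ℓ s := mul_nonneg hk0.le (by linarith)
    constructor <;> simp only [hθ] <;> linarith
  have hsin : ∀ x ∈ Icc ε φ, 0 < sin x := fun x hx =>
    Real.sin_pos_of_pos_of_lt_pi (by linarith [hx.1]) (by linarith [hx.2])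
  have hℓlip : LipschitzOnWith C ℓ (Icc a b) := by
    apply LipschitzOnWith.of_dist_le_mul
    intro s hs s' hs'
    rcases le_total s s' with hle | hle
    · rw [dist_comm, Real.dist_eq, dist_comm, Real.dist_eq, abs_of_nonneg (a := s' - s) (by linarith),
        abs_of_nonneg (by linarith [hmono s s' hs.1 hle hs'.2])]
      exact (hℓ s s' hs.1 hle hs'.2).2
    · rw [Real.dist_eq, Real.dist_eq, abs_of_nonneg (a := s - s') (by linarith),
        abs_of_nonneg (by linarith [hmono s' s hs'.1 hle hs.2])]
      exact (hℓ s' s hs'.1 hle hs.2).2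
  have hℓac : AbsolutelyContinuousOnInterval ℓ a b := by
    apply LipschitzOnWith.absolutelyContinuousOnInterval (K := C)
    rwa [uIcc_of_le hab]
  have hcac : AbsolutelyContinuousOnInterval (fun s => cos (θ s) / sin (θ s)) a b := by
    have h1 : ContDiffOn ℝ 1 (fun x => cos x / sin x) (Icc ε φ) :=
      Real.contDiff_cos.contDiffOn.div Real.contDiff_sin.contDiffOn (fun x hx => (hsin x hx).ne')
    obtain ⟨K1, hK1⟩ := h1.exists_lipschitzOnWith (by decide) (convex_Icc _ _) isCompact_Icc
    have h2 : ∃ K2, LipschitzOnWith K2 θ (Icc a b) := by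
      have hl : LipschitzWith ‖k‖₊ (fun x : ℝ => k * x + ε) := by
        apply LipschitzWith.of_dist_le_mul
        intro x y
        simp [Real.dist_eq, ← mul_sub, abs_mul]
      exact ⟨_, (hl.lipschitzOnWith (s := univ)).comp hℓlip (fun _ _ => mem_univ _)⟩
    obtain ⟨K2, hK2⟩ := h2
    have h3 := hK1.comp hK2 hθmem
    apply LipschitzOnWith.absolutelyContinuousOnInterval (K := K1 * K2)
    rw [uIcc_of_le hab]; exact h3
  have hgac : ∀ A : Hpt n → ℝ, LipschitzWith 1 A →
      AbsolutelyContinuousOnInterval (fun s => A (γ s)) a b := by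
    intro A hA
    apply LipschitzOnWith.absolutelyContinuousOnInterval (K := 1 * K)
    rw [uIcc_of_le hab]
    exact (hA.lipschitzOnWith (s := univ)).comp hK (fun _ _ => mem_univ _)
  have hxac : ∀ j, AbsolutelyContinuousOnInterval (fun s => (γ s).1 j) a b := fun j =>
    hgac (fun p => p.1 j) (by
      have := (LipschitzWith.eval (α := fun _ : Fin n => ℝ) j).comp
        (LipschitzWith.prod_fst (α := Fin n → ℝ) (β := (Fin n → ℝ) × ℝ))
      rw [mul_one] at this; exact this)
  have hyac : ∀ j, AbsolutelyContinuousOnInterval (fun s => (γ s).2.1 j) a b := fun j =>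
    hgac (fun p => p.2.1 j) (by
      have := (LipschitzWith.eval (α := fun _ : Fin n => ℝ) j).comp
        ((LipschitzWith.prod_fst (α := Fin n → ℝ) (β := ℝ)).comp
          (LipschitzWith.prod_snd (α := Fin n → ℝ) (β := (Fin n → ℝ) × ℝ)))
      rw [mul_one, mul_one] at this; exact this)
  have htac : AbsolutelyContinuousOnInterval (fun s => (γ s).2.2) a b :=
    hgac (fun p => p.2.2) (by
      have := ((LipschitzWith.prod_snd (α := Fin n → ℝ) (β := ℝ)).comp
          (LipschitzWith.prod_snd (α := Fin n → ℝ) (β := (Fin n → ℝ) × ℝ)))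
      rw [mul_one] at this; exact this)
  have hconst : ∀ c : ℝ, AbsolutelyContinuousOnInterval (fun _ => c) a b := fun c =>
    (LipschitzWith.const c).lipschitzOnWith.absolutelyContinuousOnInterval
  have hsum : ∀ F : Fin n → ℝ → ℝ, (∀ j, AbsolutelyContinuousOnInterval (F j) a b) →
      AbsolutelyContinuousOnInterval (fun s => ∑ j, F j s) a b := by
    intro F hF
    have : ∀ S : Finset (Fin n), AbsolutelyContinuousOnInterval (fun s => ∑ j ∈ S, F j s) a b := by
      intro S
      induction S using Finset.induction_on with
      | empty => simpa using hconst 0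
      | insert i S hi ih =>
        simp only [Finset.sum_insert hi]
        exact (hF i).fun_add ih
    exact this _
  set N : ℝ → ℝ := fun s =>
    ∑ j, (((γ s).1 j - (γ a).1 j) ^ 2 + ((γ s).2.1 j - (γ a).2.1 j) ^ 2) with hN
  set T : ℝ → ℝ := fun s => (γ s).2.2 - (γ a).2.2
        - 2 * ∑ j, ((γ s).1 j * (γ a).2.1 j - (γ s).2.1 j * (γ a).1 j) with hT
  have hNac : AbsolutelyContinuousOnInterval N a b := by
    apply hsum
    intro j
    simp only [pow_two]
    have h1 := (hxac j).fun_sub (hconst ((γ a).1 j))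
    have h2 := (hyac j).fun_sub (hconst ((γ a).2.1 j))
    exact (h1.fun_mul h1).fun_add (h2.fun_mul h2)
  have hTac : AbsolutelyContinuousOnInterval T a b := by
    refine (htac.fun_sub (hconst _)).fun_sub (AbsolutelyContinuousOnInterval.const_mul 2 (hsum _ ?_))
    intro j
    exact ((hxac j).fun_mul (hconst _)).fun_sub ((hyac j).fun_mul (hconst _))
  set g : ℝ → ℝ := fun s => k * (cos (θ s) / sin (θ s) * N s) + σ * k * T s - ℓ s with hg
  have hgac' : AbsolutelyContinuousOnInterval g a b :=
    (((hcac.fun_mul hNac).const_mul k).fun_add (hTac.const_mul (σ * k))).fun_sub hℓac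
  have hle : g b ≤ g a := by
    apply ac_le hab hgac'
    have hd' := (ae_restrict_iff' measurableSet_Icc).1 hd
    have hh' := (ae_restrict_iff' measurableSet_Icc).1 hh
    filter_upwards [hd', hh', hℓac.ae_differentiableAt] with s h1 h2 h3 hs
    have hsI : s ∈ Icc a b := Ioo_subset_Icc_self hs
    have h1 := h1 hsI
    have h2 := h2 hsI
    have h3 := (h3 (by rwa [uIcc_of_le hab])).hasDerivAt
    set v := deriv ℓ s
    have hfst := (ContinuousLinearMap.fst ℝ (Fin n → ℝ)
      ((Fin n → ℝ) × ℝ)).hasFDerivAt.comp_hasDerivAt s h1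
    have hsnd := (ContinuousLinearMap.snd ℝ (Fin n → ℝ)
      ((Fin n → ℝ) × ℝ)).hasFDerivAt.comp_hasDerivAt s h1
    have hsf := (ContinuousLinearMap.fst ℝ (Fin n → ℝ) ℝ).hasFDerivAt.comp_hasDerivAt s hsnd
    have hss := (ContinuousLinearMap.snd ℝ (Fin n → ℝ) ℝ).hasFDerivAt.comp_hasDerivAt s hsnd
    have hx : ∀ j, HasDerivAt (fun r => (γ r).1 j) ((γ' s).1 j) s := by
      intro j
      exact (hasDerivAt_pi.1 hfst) j
    have hy : ∀ j, HasDerivAt (fun r => (γ r).2.1 j) ((γ' s).2.1 j) s := by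
      intro j
      exact (hasDerivAt_pi.1 hsf) j
    have ht : HasDerivAt (fun r => (γ r).2.2) ((γ' s).2.2) s := hss
    obtain ⟨hv0, hvv⟩ := speed_le hs (fun s s' a b c => (hℓ s s' a b c).1) h3 hx hy
    have hθs := hsin _ (hθmem s hsI)
    have hNd : HasDerivAt N (∑ j, (2 * ((γ s).1 j - (γ a).1 j) * (γ' s).1 j
        + 2 * ((γ s).2.1 j - (γ a).2.1 j) * (γ' s).2.1 j)) s := by
      apply HasDerivAt.fun_sum
      intro j _
      refine ((((hx j).sub_const ((γ a).1 j)).pow 2).add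
        (((hy j).sub_const ((γ a).2.1 j)).pow 2)).congr_deriv ?_
      simp
    have hTd : HasDerivAt T (2 * ∑ j, ((γ' s).1 j * ((γ s).2.1 j - (γ a).2.1 j)
        - (γ' s).2.1 j * ((γ s).1 j - (γ a).1 j))) s := by
      have : HasDerivAt T ((γ' s).2.2 - 2 * ∑ j, ((γ' s).1 j * (γ a).2.1 j
          - (γ' s).2.1 j * (γ a).1 j)) s := by
        refine (ht.sub_const _).sub (HasDerivAt.const_mul 2 (HasDerivAt.fun_sum ?_))
        intro j _
        exact ((hx j).mul_const _).sub ((hy j).mul_const _)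
      convert this using 1
      rw [h2, ← mul_sub, ← Finset.sum_sub_distrib]
      congr 1
      exact Finset.sum_congr rfl fun j _ => by ring
    have hθd : HasDerivAt θ (k * v) s := (h3.const_mul k).add_const ε
    have hcd : HasDerivAt (fun s => cos (θ s) / sin (θ s)) (-(1 / sin (θ s) ^ 2) * (k * v)) s :=
      (hasDerivAt_cot hθs.ne').comp s hθd
    have hgd := (((hcd.mul hNd).const_mul k).add (hTd.const_mul (σ * k))).sub h3
    have hgd' : deriv g s = _ := hgd.deriv
    rw [hgd']
    have := pt_ineq (fun j => (γ s).1 j - (γ a).1 j) (fun j => (γ s).2.1 j - (γ a).2.1 j)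
      (γ' s).1 (γ' s).2.1 v (cos (θ s)) (sin (θ s)) k σ hv0 hvv (Real.cos_sq_add_sin_sq _) hθs hk0 hσ
    have e : k ^ 2 / sin (θ s) ^ 2 = k * (1 / sin (θ s) ^ 2) * k := by ring
    rw [e] at this
    simp only [hN]
    linarith
  have hga : g a = 0 := by
    simp [hg, hN, hT, hℓa, mul_comm]
  have hθb : θ b = φ := by simp [hθ, hε]
  have hgb : g b = k * (cos φ / sin φ * N b + σ * T b) - ℓ b := by
    simp only [hg, hθb]; ring
  have hkk : k * (L ^ 2 / φ) = L := by rw [hk]; field_simp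
  have : k * (L ^ 2 / φ) ≤ k * (cos φ / sin φ * N b + σ * T b) := by
    gcongr
  linarith
/-- Embedding of the left translate of the three dimensional Heisenberg group. -/
def JJ {n : ℕ} (p : Hpt n) (i : Fin n) (ξ η τ : ℝ) : Hpt n :=
  (p.1 + ξ • Pi.single i 1, p.2.1 + η • Pi.single i 1,
    p.2.2 + τ + 2 * (ξ * p.2.1 i - η * p.1 i))

lemma JJ_N {n : ℕ} (p : Hpt n) (i : Fin n) (ξ η τ ξ' η' τ' : ℝ) :
    ∑ j, (((JJ p i ξ η τ).1 j - (JJ p i ξ' η' τ').1 j) ^ 2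
      + ((JJ p i ξ η τ).2.1 j - (JJ p i ξ' η' τ').2.1 j) ^ 2) = (ξ - ξ') ^ 2 + (η - η') ^ 2 := by
  rw [Finset.sum_eq_single i]
  · simp [JJ]
  · intro j _ hj; simp [JJ, Pi.single_eq_of_ne hj]
  · simp

lemma JJ_T {n : ℕ} (p : Hpt n) (i : Fin n) (ξ η τ ξ' η' τ' : ℝ) :
    (JJ p i ξ η τ).2.2 - (JJ p i ξ' η' τ').2.2
        - 2 * ∑ j, ((JJ p i ξ η τ).1 j * (JJ p i ξ' η' τ').2.1 j
          - (JJ p i ξ η τ).2.1 j * (JJ p i ξ' η' τ').1 j)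
      = τ - τ' - 2 * (ξ * η' - η * ξ') := by
  rw [Finset.sum_eq_single i]
  · simp [JJ]; ring
  · intro j _ hj; simp [JJ, Pi.single_eq_of_ne hj]; ring
  · simp

lemma JJ_horiz {n : ℕ} (p : Hpt n) (i : Fin n) {ξ η τ ξ' η' τ' : ℝ → ℝ}
    (hξ : ∀ s, HasDerivAt ξ (ξ' s) s) (hη : ∀ s, HasDerivAt η (η' s) s)
    (hτ : ∀ s, HasDerivAt τ (τ' s) s) (cξ : ContDiff ℝ 1 ξ) (cη : ContDiff ℝ 1 η)
    (cτ : ContDiff ℝ 1 τ) (hh : ∀ s, τ' s = 2 * (ξ' s * η s - η' s * ξ s)) {a b : ℝ} (hab : a ≤ b) :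
    IsHorizontal (fun s => JJ p i (ξ s) (η s) (τ s)) a b := by
  refine ⟨hab, ?_, fun s => (ξ' s • Pi.single i 1, η' s • Pi.single i 1,
    τ' s + 2 * (ξ' s * p.2.1 i - η' s * p.1 i)), ?_, ?_⟩
  · have : ContDiff ℝ 1 (fun s => JJ p i (ξ s) (η s) (τ s)) := by
      unfold JJ; fun_prop
    exact this.contDiffOn.exists_lipschitzOnWith (by decide) (convex_Icc _ _) isCompact_Icc
  · refine Filter.Eventually.of_forall fun s => ?_
    refine HasDerivAt.prodMk ?_ (HasDerivAt.prodMk ?_ ?_)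
    · exact ((hξ s).smul_const _).const_add _
    · exact ((hη s).smul_const _).const_add _
    · exact ((hτ s).const_add _).add
        ((((hξ s).mul_const _).sub ((hη s).mul_const _)).const_mul 2)
  · refine Filter.Eventually.of_forall fun s => ?_
    rw [Finset.sum_eq_single i]
    · simp [JJ, hh]; ring
    · intro j _ hj; simp [Pi.single_eq_of_ne hj]
    · simp

lemma JJ_len {n : ℕ} (p : Hpt n) (i : Fin n) {ξ η τ ξ' η' : ℝ → ℝ} {r : ℝ} (hr : 0 ≤ r)
    (hξ : ∀ s, HasDerivAt ξ (ξ' s) s) (hη : ∀ s, HasDerivAt η (η' s) s)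
    (hh : ∀ s, ξ' s ^ 2 + η' s ^ 2 = r ^ 2) (a b : ℝ) :
    hLength (fun s => JJ p i (ξ s) (η s) (τ s)) a b ≤ ENNReal.ofReal (r * (b - a)) := by
  lift r to ℝ≥0 using hr
  have hr : (0 : ℝ) ≤ r := r.2
  have h0 : LipschitzWith r (fun s => (⟨ξ s, η s⟩ : ℂ)) := by
    have hd : ∀ s, HasDerivAt (fun s => (⟨ξ s, η s⟩ : ℂ)) (ξ' s + η' s * Complex.I) s := by
      intro s
      have := (hξ s).ofReal_comp.add ((hη s).ofReal_comp.mul_const Complex.I)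
      refine this.congr_of_eventuallyEq (Filter.Eventually.of_forall fun x => ?_)
      simp [Complex.mk_eq_add_mul_I]
    apply lipschitzWith_of_nnnorm_deriv_le (𝕜 := ℝ) (fun s => (hd s).differentiableAt)
    intro s
    rw [(hd s).deriv, ← NNReal.coe_le_coe, coe_nnnorm]
    apply le_of_sq_le_sq _ hr
    rw [← hh s, Complex.sq_norm, Complex.normSq_add_mul_I]
  have h1 : LipschitzOnWith r (fun s => hproj (JJ p i (ξ s) (η s) (τ s))) (Icc a b) := by
    apply LipschitzWith.lipschitzOnWith
    apply LipschitzWith.of_dist_le_mul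
    intro s s'
    refine le_trans (le_of_eq ?_) (h0.dist_le_mul s s')
    rw [← sq_eq_sq₀ dist_nonneg dist_nonneg, hproj_dist_sq, JJ_N, dist_eq_norm, Complex.sq_norm,
      Complex.normSq_apply]
    simp; ring
  refine (evar_lip h1).trans (le_of_eq ?_)
  rw [ENNReal.ofReal_mul hr]
  simp

lemma geod_of {n : ℕ} {γ : ℝ → Hpt n} {a b L : ℝ} (hγ : IsHorizontal γ a b)
    (hup : hLength γ a b ≤ ENNReal.ofReal L)
    (hlow : ∀ (δ : ℝ → Hpt n) (c d : ℝ), IsHorizontal δ c d → δ c = γ a → δ d = γ b →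
      ENNReal.ofReal L ≤ hLength δ c d) : IsGeodesicOn γ a b := by
  refine ⟨hγ, le_antisymm ?_ ?_⟩
  · unfold ccDist
    refine le_iInf fun δ => le_iInf fun c => le_iInf fun d => le_iInf fun h => le_iInf fun h1 =>
      le_iInf fun h2 => hup.trans (hlow δ c d h h1 h2)
  · unfold ccDist
    exact iInf_le_of_le γ <| iInf_le_of_le a <| iInf_le_of_le b <| iInf_le_of_le hγ <|
      iInf_le_of_le rfl <| iInf_le_of_le rfl le_rfl

lemma straight {n : ℕ} {Ω : Set (Hpt n)} (hΩ : GeodConvexSet Ω) (p : Hpt n) (i : Fin n)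
    {u v R w : ℝ} (huv : u ^ 2 + v ^ 2 = 1) (hR : 0 < R)
    (h1 : JJ p i (-R * u) (-R * v) w ∈ Ω) (h2 : JJ p i (R * u) (R * v) w ∈ Ω) :
    ∀ s, |s| ≤ R → JJ p i (s * u) (s * v) w ∈ Ω := by
  intro s hs
  have hu : ∀ s, HasDerivAt (fun s : ℝ => s * u) u s := fun s => by
    simpa using (hasDerivAt_id s).mul_const u
  have hv : ∀ s, HasDerivAt (fun s : ℝ => s * v) v s := fun s => by
    simpa using (hasDerivAt_id s).mul_const v
  have hg : IsGeodesicOn (fun s => JJ p i (s * u) (s * v) w) (-R) R := by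
    refine geod_of (L := 1 * (R - -R)) ?_ ?_ ?_
    · exact JJ_horiz p i (τ := fun _ => w) (τ' := fun _ => 0) hu hv
        (fun s => hasDerivAt_const _ _) (by fun_prop) (by fun_prop) (by fun_prop)
        (fun s => by ring) (by linarith)
    · exact JJ_len p i (τ := fun _ => w) zero_le_one hu hv (fun s => by rw [huv]; norm_num) _ _
    · intro δ c d hδ hc hd
      have := eVariationOn.edist_le (fun s => hproj (δ s)) (s := Icc c d) (x := d) (y := c)
        ⟨hδ.1, le_rfl⟩ ⟨le_rfl, hδ.1⟩
      refine le_trans (le_of_eq ?_) this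
      rw [edist_dist]
      congr 1
      rw [← sq_eq_sq₀ (by linarith) dist_nonneg, hproj_dist_sq, hc, hd, JJ_N]
      linear_combination (-4 * R ^ 2) * huv
  exact hΩ _ h1 _ h2 _ _ _ hg rfl rfl s (abs_le.1 hs)

set_option maxHeartbeats 2000000 in
lemma arc {n : ℕ} {Ω : Set (Hpt n)} (hΩ : GeodConvexSet Ω) (p : Hpt n) (i : Fin n)
    {u v σ ε w δ : ℝ} (huv : u ^ 2 + v ^ 2 = 1) (hσ : σ ^ 2 = 1) (hε : 0 < ε) (hδ : 0 < δ)
    (hw : σ * w ≤ 0) (hwδ : 2 * ε ^ 2 - σ * w ≤ δ ^ 2)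
    (h1 : JJ p i (-ε * u) (-ε * v) 0 ∈ Ω) (h2 : JJ p i (-ε * σ * v) (ε * σ * u) w ∈ Ω) :
    ∃ m τ, |m| ≤ 3 * δ ∧ τ ≠ 0 ∧ |τ| ≤ δ ^ 2 ∧ JJ p i (m * u) (m * v) τ ∈ Ω := by
  have hpi := Real.pi_gt_three
  set D := 2 * ε ^ 2 - σ * w with hD
  have hDε : 2 * ε ^ 2 ≤ D := by linarith
  obtain ⟨φ, ⟨hφ1, hφ2⟩, hφ⟩ : ∃ φ ∈ Ioo (π / 4) π,
      ε ^ 2 * (2 * φ - sin (2 * φ)) - D * sin φ ^ 2 = 0 := by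
    have hc : ContinuousOn (fun φ : ℝ => ε ^ 2 * (2 * φ - sin (2 * φ)) - D * sin φ ^ 2)
      (Icc (π / 4) π) := by fun_prop
    have := intermediate_value_Ioo (by linarith) hc
    apply this
    constructor
    · have e1 : 2 * (π / 4) = π / 2 := by ring
      simp only [e1, Real.sin_pi_div_two, Real.sin_pi_div_four]
      have e2 : (√2 / 2) ^ 2 = (1 / 2 : ℝ) := by rw [div_pow, Real.sq_sqrt (by norm_num)]; norm_num
      rw [e2]
      have := Real.pi_lt_four
      nlinarith [sq_pos_of_pos hε]
    · simp
      positivity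
  have hsin : 0 < sin φ := Real.sin_pos_of_pos_of_lt_pi (by linarith) hφ2
  have hs2 : (0 : ℝ) < √2 := by positivity
  have hs22 : √2 ^ 2 = (2 : ℝ) := Real.sq_sqrt (by norm_num)
  set r := ε / (√2 * sin φ) with hr
  have hr0 : 0 < r := by positivity
  have hrε : ε = r * √2 * sin φ := by rw [hr]; field_simp
  have hrD : 2 * r ^ 2 * (2 * φ - sin (2 * φ)) = D := by
    have e : ε ^ 2 = 2 * r ^ 2 * sin φ ^ 2 := by rw [hrε]; linear_combination (r^2 * sin φ ^ 2) * hs22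
    rw [e] at hφ
    have : (2 * r ^ 2 * (2 * φ - sin (2 * φ)) - D) * sin φ ^ 2 = 0 := by linarith
    rcases mul_eq_zero.1 this with h | h
    · linarith
    · exact absurd h (by positivity)
  set β := φ - π / 4 with hβ
  have hβ0 : 0 < β := by linarith
  set X : ℝ → ℝ := fun s => r * (sin (s - β) + sin β) with hX
  set Y : ℝ → ℝ := fun s => r * (cos β - cos (s - β)) with hY
  have hXd : ∀ s, HasDerivAt X (r * cos (s - β)) s := by
    intro s
    have := (((hasDerivAt_id s).sub_const β).sin.add_const (sin β)).const_mul r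
    simpa using this
  have hYd : ∀ s, HasDerivAt Y (r * sin (s - β)) s := by
    intro s
    have := (((hasDerivAt_id s).sub_const β).cos.const_sub (cos β)).const_mul r
    simpa using this
  have hXe : X (2 * φ) = ε := by
    simp only [hX]
    have : 2 * φ - β = φ + π / 4 := by rw [hβ]; ring
    rw [this, hβ, sin_add, sin_sub, hrε, cos_pi_div_four, sin_pi_div_four]; ring
  have hYe : Y (2 * φ) = ε := by
    simp only [hY]
    have : 2 * φ - β = φ + π / 4 := by rw [hβ]; ring
    rw [this, hβ, cos_add, cos_sub, hrε, cos_pi_div_four, sin_pi_div_four]; ring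
  have hX0 : X 0 = 0 := by simp [hX]
  have hY0 : Y 0 = 0 := by simp [hY]
  have hXm : X (2 * β) = 2 * r * sin β := by
    simp only [hX]
    have : 2 * β - β = β := by ring
    rw [this]; ring
  have hYm : Y (2 * β) = 0 := by
    simp only [hY]
    have : 2 * β - β = β := by ring
    rw [this]; ring
  set ξ : ℝ → ℝ := fun s => -ε * u + (X s * u - σ * Y s * v) with hξ
  set η : ℝ → ℝ := fun s => -ε * v + (X s * v + σ * Y s * u) with hη
  set τ : ℝ → ℝ := fun s => -2 * σ * r ^ 2 * (s - sin s) + 2 * ε * σ * Y s with hτ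
  have hξd : ∀ s, HasDerivAt ξ (r * cos (s - β) * u - σ * (r * sin (s - β)) * v) s := fun s =>
    (((hXd s).mul_const u).sub (((hYd s).const_mul σ).mul_const v)).const_add _
  have hηd : ∀ s, HasDerivAt η (r * cos (s - β) * v + σ * (r * sin (s - β)) * u) s := fun s =>
    (((hXd s).mul_const v).add (((hYd s).const_mul σ).mul_const u)).const_add _
  have hτd : ∀ s, HasDerivAt τ (-2 * σ * r ^ 2 * (1 - cos s) + 2 * ε * σ * (r * sin (s - β))) s :=
    fun s => (((hasDerivAt_id s).sub (Real.hasDerivAt_sin s)).const_mul _).add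
      ((hYd s).const_mul _)
  have cX : ContDiff ℝ 1 X := by
    simp only [hX]; fun_prop
  have cY : ContDiff ℝ 1 Y := by
    simp only [hY]; fun_prop
  have hend : τ (2 * φ) = w := by
    simp only [hτ, hYe]
    linear_combination (-σ) * hrD + w * hσ - σ * hD
  have hhor : IsHorizontal (fun s => JJ p i (ξ s) (η s) (τ s)) 0 (2 * φ) := by
    refine JJ_horiz p i hξd hηd hτd (by fun_prop) (by fun_prop) (by fun_prop) ?_ (by linarith)
    intro s
    have e : cos s = cos (s - β) * cos β - sin (s - β) * sin β := by
      rw [← cos_add]; congr 1; ring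
    have e2 := Real.sin_sq_add_cos_sq (s - β)
    simp only [hξ, hη, hX, hY]
    rw [e]
    linear_combination (-2 * σ * (ε * r * sin (s - β) + r ^ 2 * (cos (s - β) * cos β
      - sin (s - β) * sin β - (sin (s - β) ^ 2 + cos (s - β) ^ 2)))) * huv + 2 * σ * r ^ 2 * e2
  have hgeo : IsGeodesicOn (fun s => JJ p i (ξ s) (η s) (τ s)) 0 (2 * φ) := by
    refine geod_of (L := r * (2 * φ - 0)) hhor ?_ ?_
    · refine JJ_len p i hr0.le hξd hηd ?_ _ _
      intro s
      have e2 := Real.sin_sq_add_cos_sq (s - β)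
      linear_combination (r ^ 2 * (cos (s - β) ^ 2 + σ ^ 2 * sin (s - β) ^ 2)) * huv
        + r ^ 2 * sin (s - β) ^ 2 * hσ + r ^ 2 * e2
    · intro δ c d hδ hc hd
      have hφ0 : 0 < φ := by linarith
      refine core hδ hφ0 hφ2 (σ := -σ) (by rw [sub_zero]; positivity) (by rw [neg_sq, hσ]) ?_
      rw [hc, hd, JJ_T, JJ_N, hend]
      have eξ : ξ (2 * φ) = -ε * σ * v := by simp only [hξ, hXe, hYe]; ring
      have eη : η (2 * φ) = ε * σ * u := by simp only [hη, hXe, hYe]; ring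
      have eξ0 : ξ 0 = -ε * u := by simp [hξ, hX0, hY0]
      have eη0 : η 0 = -ε * v := by simp [hη, hX0, hY0]
      have eτ0 : τ 0 = 0 := by simp [hτ, hY0]
      rw [eξ, eη, eξ0, eη0, eτ0]
      have a1 : (-ε * σ * v - -ε * u) ^ 2 + (ε * σ * u - -ε * v) ^ 2 = 4 * r ^ 2 * sin φ ^ 2 := by
        have : 2 * ε ^ 2 = 4 * r ^ 2 * sin φ ^ 2 := by
          rw [hrε]; linear_combination (2 * r^2 * sin φ ^ 2) * hs22
        rw [← this]
        linear_combination (ε ^ 2 * (u ^ 2 + v ^ 2)) * hσ + 2 * ε ^ 2 * huv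
      have a2 : -σ * (w - 0 - 2 * (-ε * σ * v * (-ε * v) - ε * σ * u * (-ε * u))) = D := by
        rw [hD]
        linear_combination (2 * ε ^ 2) * σ ^ 2 * huv + 2 * ε ^ 2 * hσ
      rw [a1, a2, ← hrD, sin_two_mul]
      apply le_of_eq
      field_simp
      ring
  have hm := hΩ _ (by simpa [hξ, hη, hτ, hX0, hY0] using h1) _ ?_ _ _ _ hgeo rfl rfl (2 * β)
    ⟨by linarith, by linarith⟩
  rotate_left
  · rw [hend]
    simp only [hξ, hη, hXe, hYe]
    convert h2 using 2 <;> ring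
  have hlt : ∀ x : ℝ, 0 < x → sin x < x := fun x hx => Real.sin_lt hx
  have hsb := hlt (2 * β) (by linarith)
  have hmon : 2 * β - sin (2 * β) ≤ 2 * φ - sin (2 * φ) := by
    have : |sin (2 * φ) - sin (2 * β)| ≤ |2 * φ - 2 * β| := Real.abs_sin_sub_sin_le _ _
    rw [abs_of_nonneg (a := 2 * φ - 2 * β) (by linarith)] at this
    linarith [le_abs_self (sin (2 * φ) - sin (2 * β))]
  have hr2 : 0 < 2 * r ^ 2 := by positivity
  have hbig : 1 / 2 ≤ 2 * φ - sin (2 * φ) := by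
    have : |sin (2 * φ) - sin (π / 2)| ≤ |2 * φ - π / 2| := Real.abs_sin_sub_sin_le _ _
    rw [abs_of_nonneg (a := 2 * φ - π / 2) (by linarith), sin_pi_div_two] at this
    linarith [le_abs_self (sin (2 * φ) - 1)]
  have hrδ : r ≤ δ := by
    apply le_of_sq_le_sq _ hδ.le
    nlinarith
  have hεδ : ε ≤ δ := by
    apply le_of_sq_le_sq _ hδ.le
    nlinarith
  refine ⟨2 * r * sin β - ε, -2 * σ * r ^ 2 * (2 * β - sin (2 * β)), ?_, ?_, ?_, ?_⟩
  · have hb1 := Real.neg_one_le_sin β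
    have hb2 := Real.sin_le_one β
    have hb3 : r * sin β ≤ r * 1 := by gcongr
    have hb4 : r * (-1) ≤ r * sin β := by gcongr
    rw [abs_le]
    constructor <;> linarith
  · have : σ ≠ 0 := by rintro rfl; norm_num at hσ
    have h3 : 2 * β - sin (2 * β) ≠ 0 := by linarith
    simp [this, hr0.ne', h3]
  · have hσa : |σ| = 1 := by
      rw [← sq_eq_sq₀ (abs_nonneg _) zero_le_one, sq_abs, hσ]; norm_num
    have : |(-2 * σ * r ^ 2 * (2 * β - sin (2 * β)))| = 2 * r ^ 2 * (2 * β - sin (2 * β)) := by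
      rw [abs_mul, abs_mul, abs_mul, hσa, abs_of_pos (a := 2 * β - sin (2 * β)) (by linarith)]
      simp
    rw [this]
    have : 2 * r ^ 2 * (2 * β - sin (2 * β)) ≤ 2 * r ^ 2 * (2 * φ - sin (2 * φ)) := by gcongr
    linarith
  · convert hm using 2
    · simp only [hξ, hXm, hYm]; ring
    · simp only [hη, hXm, hYm]; ring
    · simp only [hτ, hYm]; ring

theorem exists_box {n : ℕ} (Ω : Set (Hpt n)) (ξ₀ : Hpt n) (hξ : ξ₀ ∈ Ω)
    (U : Set ((Fin n → ℝ) × (Fin n → ℝ))) (hU : IsOpen U)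
    (f : (Fin n → ℝ) × (Fin n → ℝ) → ℝ) (hf : ContinuousOn f U)
    (W : Set (Hpt n)) (hW : IsOpen W) (hξW : ξ₀ ∈ W)
    (hgraph : Ω ∩ W = {p : Hpt n | (p.1, p.2.1) ∈ U ∧ p.2.2 = f (p.1, p.2.1)}) (i : Fin n) :
    ∃ (ρ : ℝ) (F : ℝ × ℝ → ℝ), 0 < ρ ∧ F (0, 0) = 0 ∧
      ContinuousOn F {z | |z.1| < ρ ∧ |z.2| < ρ} ∧
      (∀ ξ η, |ξ| < ρ → |η| < ρ → JJ ξ₀ i ξ η (F (ξ, η)) ∈ Ω) ∧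
      (∀ ξ η τ, |ξ| < ρ → |η| < ρ → |τ| < ρ → JJ ξ₀ i ξ η τ ∈ Ω → τ = F (ξ, η)) := by
  have h0 : ξ₀ ∈ {p : Hpt n | (p.1, p.2.1) ∈ U ∧ p.2.2 = f (p.1, p.2.1)} := by
    rw [← hgraph]; exact ⟨hξ, hξW⟩
  obtain ⟨h0U, h0f⟩ := h0
  set Z : ℝ × ℝ → (Fin n → ℝ) × (Fin n → ℝ) := fun z =>
    (ξ₀.1 + z.1 • Pi.single i 1, ξ₀.2.1 + z.2 • Pi.single i 1) with hZ
  have hZc : Continuous Z := by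
    simp only [hZ]; fun_prop
  set G : ℝ × ℝ × ℝ → Hpt n := fun z => JJ ξ₀ i z.1 z.2.1 z.2.2 with hG
  have hGc : Continuous G := by
    simp only [hG, JJ]; fun_prop
  have hG0 : G (0, 0, 0) = ξ₀ := by simp [hG, JJ]
  have hZ0 : Z (0, 0) = (ξ₀.1, ξ₀.2.1) := by simp [hZ]
  have hUo : Z ⁻¹' U ∈ nhds ((0 : ℝ), (0 : ℝ)) :=
    (hU.preimage hZc).mem_nhds (by rw [mem_preimage, hZ0]; exact h0U)
  have hWo : G ⁻¹' W ∈ nhds ((0 : ℝ), (0 : ℝ), (0 : ℝ)) :=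
    (hW.preimage hGc).mem_nhds (by rw [mem_preimage, hG0]; exact hξW)
  obtain ⟨r1, hr1, hb1⟩ := Metric.mem_nhds_iff.1 hUo
  obtain ⟨r2, hr2, hb2⟩ := Metric.mem_nhds_iff.1 hWo
  have hin1 : ∀ ξ η : ℝ, |ξ| < min r1 r2 → |η| < min r1 r2 → Z (ξ, η) ∈ U := by
    intro ξ η h1 h2
    apply hb1
    simp only [Metric.mem_ball, Prod.dist_eq, Real.dist_eq, sub_zero]
    exact max_lt (h1.trans_le (min_le_left _ _)) (h2.trans_le (min_le_left _ _))
  refine ⟨min r1 r2, fun z => f (Z z) - ξ₀.2.2 - 2 * (z.1 * ξ₀.2.1 i - z.2 * ξ₀.1 i),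
    lt_min hr1 hr2, ?_, ?_, ?_, ?_⟩
  · simp only [hZ0, ← h0f]; simp
  · have : ContinuousOn (fun z => f (Z z)) {z : ℝ × ℝ | |z.1| < min r1 r2 ∧ |z.2| < min r1 r2} :=
      hf.comp hZc.continuousOn (fun z hz => hin1 z.1 z.2 hz.1 hz.2)
    exact (this.sub continuousOn_const).sub (by fun_prop)
  · intro ξ η h1 h2
    have : JJ ξ₀ i ξ η (f (Z (ξ, η)) - ξ₀.2.2 - 2 * (ξ * ξ₀.2.1 i - η * ξ₀.1 i)) ∈ Ω ∩ W := by
      rw [hgraph]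
      refine ⟨hin1 ξ η h1 h2, ?_⟩
      change ξ₀.2.2 + (f (Z (ξ, η)) - ξ₀.2.2 - 2 * (ξ * ξ₀.2.1 i - η * ξ₀.1 i))
        + 2 * (ξ * ξ₀.2.1 i - η * ξ₀.1 i) = f (Z (ξ, η))
      ring
    exact this.1
  · intro ξ η τ h1 h2 h3 h
    have hw : JJ ξ₀ i ξ η τ ∈ W := by
      have : (ξ, η, τ) ∈ G ⁻¹' W := by
        apply hb2
        simp only [Metric.mem_ball, Prod.dist_eq, Real.dist_eq, sub_zero]
        exact max_lt (h1.trans_le (min_le_right _ _))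
          (max_lt (h2.trans_le (min_le_right _ _)) (h3.trans_le (min_le_right _ _)))
      exact this
    have : JJ ξ₀ i ξ η τ ∈ Ω ∩ W := ⟨h, hw⟩
    rw [hgraph] at this
    have h4 : ξ₀.2.2 + τ + 2 * (ξ * ξ₀.2.1 i - η * ξ₀.1 i) = f (Z (ξ, η)) := this.2
    change τ = f (Z (ξ, η)) - ξ₀.2.2 - 2 * (ξ * ξ₀.2.1 i - η * ξ₀.1 i)
    linarith

/-- If a neighbourhood of some point of `Ω ⊆ ℍⁿ` in `Ω` is the graph of
a continuous function over the `z`-plane, then `Ω` is not geodetically convex. -/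
theorem stmt_12 (n : ℕ) (hn : 1 ≤ n) (Ω : Set (Hpt n)) (ξ₀ : Hpt n) (hξ : ξ₀ ∈ Ω)
    (U : Set ((Fin n → ℝ) × (Fin n → ℝ))) (hU : IsOpen U)
    (f : (Fin n → ℝ) × (Fin n → ℝ) → ℝ) (hf : ContinuousOn f U)
    (W : Set (Hpt n)) (hW : IsOpen W) (hξW : ξ₀ ∈ W)
    (hgraph : Ω ∩ W = {p : Hpt n | (p.1, p.2.1) ∈ U ∧ p.2.2 = f (p.1, p.2.1)}) :
    ¬ GeodConvexSet Ω := by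
  intro hΩ
  let i : Fin n := ⟨0, hn⟩
  obtain ⟨ρ, F, hρ, hF0, hFc, hin, hout⟩ :=
    exists_box Ω ξ₀ hξ U hU f hf W hW hξW hgraph i
  have hopen : IsOpen {z : ℝ × ℝ | |z.1| < ρ ∧ |z.2| < ρ} :=
    (isOpen_lt continuous_fst.abs continuous_const).inter (isOpen_lt continuous_snd.abs continuous_const)
  have hca : ContinuousAt F (0, 0) :=
    hFc.continuousAt (hopen.mem_nhds (by simp [hρ]))
  have hsmall : ∀ c > 0, ∃ r > 0, ∀ ξ η : ℝ, |ξ| < r → |η| < r → |F (ξ, η)| < c := by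
    intro c hc
    obtain ⟨r, hr, h⟩ := Metric.continuousAt_iff.1 hca c hc
    refine ⟨r, hr, fun ξ η h1 h2 => ?_⟩
    have := h (x := (ξ, η)) (by
      simp only [Prod.dist_eq, Real.dist_eq, sub_zero]; exact max_lt h1 h2)
    rwa [hF0, Real.dist_eq, sub_zero] at this
  obtain ⟨r1, hr1, hs1⟩ := hsmall ρ hρ
  set R := min ρ r1 / 2 with hRdef
  have hR : 0 < R := half_pos (lt_min hρ hr1)
  have hRρ : R < ρ := by
    have := min_le_left ρ r1
    have := lt_min hρ hr1
    linarith
  have hRr : R < r1 := by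
    have := min_le_right ρ r1
    have := lt_min hρ hr1
    linarith
  have hle : ∀ s c : ℝ, |s| ≤ R → |c| ≤ 1 → |s * c| ≤ R := by
    intro s c hs hc
    rw [abs_mul]
    nlinarith [abs_nonneg s, abs_nonneg c]
  have habsR : |R| ≤ R := (abs_of_pos hR).le
  have habsnR : |(-R)| ≤ R := by rw [abs_neg]; exact habsR
  -- the antipodal pair
  obtain ⟨u, v, huv, hanti⟩ : ∃ u v : ℝ, u ^ 2 + v ^ 2 = 1 ∧
      F (R * u, R * v) = F (-R * u, -R * v) := by
    set g : ℝ → ℝ := fun θ => F (R * cos θ, R * sin θ) - F (-R * cos θ, -R * sin θ) with hg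
    have hgc : ContinuousOn g (Icc 0 π) := by
      apply ContinuousOn.sub
      · exact hFc.comp (f := fun θ : ℝ => (R * cos θ, R * sin θ)) (by fun_prop)
          (fun θ _ => ⟨(hle R _ habsR (abs_cos_le_one θ)).trans_lt hRρ,
            (hle R _ habsR (abs_sin_le_one θ)).trans_lt hRρ⟩)
      · exact hFc.comp (f := fun θ : ℝ => (-R * cos θ, -R * sin θ)) (by fun_prop)
          (fun θ _ => ⟨(hle (-R) _ habsnR (abs_cos_le_one θ)).trans_lt hRρ,
            (hle (-R) _ habsnR (abs_sin_le_one θ)).trans_lt hRρ⟩)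
    have hgp : g π = - g 0 := by simp [hg]
    have h0 : (0 : ℝ) ∈ g '' Icc 0 π := by
      rcases le_total (g 0) 0 with h | h
      · exact intermediate_value_Icc pi_pos.le hgc ⟨h, by rw [hgp]; linarith⟩
      · exact intermediate_value_Icc' pi_pos.le hgc ⟨by rw [hgp]; linarith, h⟩
    obtain ⟨θ, -, hθ⟩ := h0
    exact ⟨cos θ, sin θ, cos_sq_add_sin_sq θ, sub_eq_zero.1 hθ⟩
  have hu : |u| ≤ 1 := abs_le_one_iff_mul_self_le_one.2 (by nlinarith [sq_nonneg v])
  have hv : |v| ≤ 1 := abs_le_one_iff_mul_self_le_one.2 (by nlinarith [sq_nonneg u])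
  have lt_of : ∀ s c : ℝ, |s| ≤ R → |c| ≤ 1 → |s * c| < ρ := fun s c hs hc =>
    (hle s c hs hc).trans_lt hRρ
  have lt_of1 : ∀ s c : ℝ, |s| ≤ R → |c| ≤ 1 → |s * c| < r1 := fun s c hs hc =>
    (hle s c hs hc).trans_lt hRr
  set w₀ := F (R * u, R * v) with hw₀
  have hw₀ρ : |w₀| < ρ := hs1 _ _ (lt_of1 R u habsR hu) (lt_of1 R v habsR hv)
  have hst := straight hΩ ξ₀ i huv hR (w := w₀)
    (by rw [hanti]; exact hin _ _ (lt_of (-R) u habsnR hu) (lt_of (-R) v habsnR hv))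
    (hin _ _ (lt_of R u habsR hu) (lt_of R v habsR hv))
  have hFw : ∀ s : ℝ, |s| ≤ R → w₀ = F (s * u, s * v) := fun s hs =>
    hout _ _ _ (lt_of s u hs hu) (lt_of s v hs hv) hw₀ρ (hst s hs)
  have hw00 : w₀ = 0 := by
    have := hFw 0 (by simpa using hR.le)
    simpa [hF0] using this
  have hFz : ∀ s : ℝ, |s| ≤ R → F (s * u, s * v) = 0 := fun s hs => by
    rw [← hFw s hs, hw00]
  set δ := min (R / 4) 1 with hδdef
  have hδ : 0 < δ := lt_min (by positivity) one_pos
  have hδR : δ ≤ R / 4 := min_le_left _ _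
  have hδ1 : δ ≤ 1 := min_le_right _ _
  have hδρ : δ ^ 2 < ρ := by nlinarith
  obtain ⟨r2, hr2, hs2⟩ := hsmall (δ ^ 2 / 2) (by positivity)
  set ε := min (r2 / 2) (δ / 2) with hεdef
  have hε : 0 < ε := lt_min (by positivity) (by positivity)
  have hεr : ε ≤ r2 / 2 := min_le_left _ _
  have hεδ : ε ≤ δ / 2 := min_le_right _ _
  have hεa : |ε| ≤ R := by rw [abs_of_pos hε]; linarith
  have hεn : |(-ε)| ≤ R := by rw [abs_neg]; exact hεa
  have hle2 : ∀ c : ℝ, |c| ≤ 1 → |ε * c| < r2 := by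
    intro c hc
    rw [abs_mul, abs_of_pos hε]
    nlinarith [abs_nonneg c]
  set w := F (-ε * v, ε * u) with hwdef
  have hwa : |w| < δ ^ 2 / 2 :=
    hs2 _ _ (by rw [neg_mul, abs_neg]; exact hle2 v hv) (hle2 u hu)
  have hC : JJ ξ₀ i (-ε * v) (ε * u) w ∈ Ω :=
    hin _ _ (lt_of (-ε) v hεn hv) (lt_of ε u hεa hu)
  have hP : ∀ s : ℝ, |s| ≤ R → JJ ξ₀ i (s * u) (s * v) 0 ∈ Ω := fun s hs => by
    have := hin _ _ (lt_of s u hs hu) (lt_of s v hs hv)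
    rwa [hFz s hs] at this
  have hε2 : 2 * ε ^ 2 ≤ δ ^ 2 / 2 := by nlinarith
  have fin : ∀ m τ : ℝ, |m| ≤ 3 * δ → τ ≠ 0 → |τ| ≤ δ ^ 2 →
      JJ ξ₀ i (m * u) (m * v) τ ∈ Ω → False := by
    intro m τ hm hτ hτ2 h
    have hmR : |m| ≤ R := by linarith
    apply hτ
    rw [hout _ _ _ (lt_of m u hmR hu) (lt_of m v hmR hv) (hτ2.trans_lt hδρ) h, hFz m hmR]
  have hab := abs_lt.1 hwa
  rcases le_total w 0 with hw | hw
  · obtain ⟨m, τ, hm, hτ, hτ2, h⟩ := arc hΩ ξ₀ i (σ := 1) (w := w) huv (by norm_num) hε hδ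
      (by linarith) (by linarith) (hP (-ε) hεn) (by simpa using hC)
    exact fin m τ hm hτ hτ2 h
  · obtain ⟨m, τ, hm, hτ, hτ2, h⟩ := arc hΩ ξ₀ i (u := -u) (v := -v) (σ := -1) (w := w)
      (by rw [neg_sq, neg_sq]; exact huv) (by norm_num) hε hδ
      (by linarith) (by linarith) (by simpa using hP ε hεa) (by simpa using hC)
    refine fin (-m) τ (by rwa [abs_neg]) hτ hτ2 ?_
    simpa using h
end
end

section
/- Let (r_m)_{m≥1} be the sequence of positive real numbers defined by r₁ = 1/(2√π), r₂ = r₁·√((π+2)/(2π)), and, for m ≥ 3, r_m² = ((π+2)/(2π))·r_{m−1}² + (1/π)·(∑_{j=1}^{m−2} r_j)·r_{m−1}. Then for every m ≥ 3, r_m² > (1 + c)·r_{m−1}², where c = (10 − 3π)/(10π) > 0; equivalently, r_m² > ((π+2)/(2π))·r_{m−1}² + (1/5)·r_{m−1}². -/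
open Real

/-- For the sequence of radii `r_m` (with `r₁ = 1/(2√π)`,
`r₂ = r₁√((π+2)/(2π))` and `r_m² = ((π+2)/(2π))r_{m-1}² + (1/π)(∑_{j=1}^{m-2} r_j)r_{m-1}`
for `m ≥ 3`), one has `r_m² > (1 + c) r_{m-1}²` for all `m ≥ 3`, where
`c = (10 - 3π)/(10π) > 0`; equivalently `r_m² > ((π+2)/(2π))r_{m-1}² + (1/5)r_{m-1}²`. -/
theorem stmt_17 (r : ℕ → ℝ) (hpos : ∀ m, 1 ≤ m → 0 < r m)
    (h1 : r 1 = 1 / (2 * Real.sqrt π))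
    (h2 : r 2 = r 1 * Real.sqrt ((π + 2) / (2 * π)))
    (hrec : ∀ m, 3 ≤ m → (r m) ^ 2 =
      ((π + 2) / (2 * π)) * (r (m - 1)) ^ 2
        + (1 / π) * (∑ j ∈ Finset.Icc 1 (m - 2), r j) * r (m - 1)) :
    (0 < (10 - 3 * π) / (10 * π)) ∧
    ∀ m, 3 ≤ m →
      (r m) ^ 2 > (1 + (10 - 3 * π) / (10 * π)) * (r (m - 1)) ^ 2 ∧
      (r m) ^ 2 > ((π + 2) / (2 * π)) * (r (m - 1)) ^ 2 + (1 / 5) * (r (m - 1)) ^ 2 := by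
  have hp3 := Real.pi_gt_three
  have hp4 := Real.pi_lt_d2
  have ha : (π + 2) / (2 * π) ≤ 1 := by
    rw [div_le_one (by positivity)]; linarith
  have hi : 1 / π ≤ 1 := by
    rw [div_le_one (by positivity)]; linarith
  have key : ∀ k, r (k + 2) ≤ ∑ j ∈ Finset.Icc 1 (k + 1), r j := by
    intro k
    induction k with
    | zero =>
      have := hpos 1 le_rfl
      have hs : Real.sqrt ((π + 2) / (2 * π)) ≤ 1 := Real.sqrt_le_one.mpr ha
      simp only [zero_add, Finset.Icc_self, Finset.sum_singleton]
      rw [h2]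
      nlinarith
    | succ k ih =>
      have e := hrec (k + 3) (by omega)
      have e1 : k + 3 - 1 = k + 2 := by omega
      have e2 : k + 3 - 2 = k + 1 := by omega
      rw [e1, e2] at e
      have hr := hpos (k + 2) (by omega)
      have hsum : ∑ j ∈ Finset.Icc 1 (k + 1 + 1), r j
          = ∑ j ∈ Finset.Icc 1 (k + 1), r j + r (k + 2) :=
        Finset.sum_Icc_succ_top (by omega) _
      rw [hsum]
      change r (k + 3) ≤ _
      generalize ∑ j ∈ Finset.Icc 1 (k + 1), r j = S at *
      have hS : 0 < S := lt_of_lt_of_le hr ih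
      refine le_of_not_gt fun hlt => ?_
      have b0 : (S + r (k + 2)) ^ 2 < r (k + 3) ^ 2 := pow_lt_pow_left₀ hlt (by positivity) (by norm_num)
      have b1 := mul_le_mul_of_nonneg_right ha (sq_nonneg (r (k + 2)))
      have b2 := mul_le_mul_of_nonneg_right hi (mul_pos hS hr).le
      nlinarith [mul_pos hS hr, sq_nonneg S]
  refine ⟨div_pos (by linarith) (by positivity), ?_⟩
  intro m hm
  obtain ⟨k, rfl⟩ := Nat.exists_eq_add_of_le' hm
  have e := hrec (k + 3) (by omega)
  have e1 : k + 3 - 1 = k + 2 := by omega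
  have e2 : k + 3 - 2 = k + 1 := by omega
  rw [e1, e2] at e
  rw [e1]
  have hr := hpos (k + 2) (by omega)
  have hk := key k
  have hc : 1 + (10 - 3 * π) / (10 * π) = (π + 2) / (2 * π) + 1 / 5 := by
    field_simp; ring
  have hi5 : 1 / 5 < 1 / π := by
    apply one_div_lt_one_div_of_lt <;> linarith
  have main : (r (k + 3)) ^ 2 > ((π + 2) / (2 * π)) * (r (k + 2)) ^ 2
      + (1 / 5) * (r (k + 2)) ^ 2 := by
    rw [e]
    have b1 : (1 / 5) * (r (k + 2)) ^ 2 < (1 / π) * (r (k + 2)) ^ 2 :=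
      mul_lt_mul_of_pos_right hi5 (by positivity)
    have b2 : (1 / π) * (r (k + 2) * r (k + 2))
        ≤ (1 / π) * ((∑ j ∈ Finset.Icc 1 (k + 1), r j) * r (k + 2)) :=
      mul_le_mul_of_nonneg_left (mul_le_mul_of_nonneg_right hk hr.le) (by positivity)
    nlinarith
  refine ⟨?_, main⟩
  rw [hc, add_mul]
  exact main
end

section
/- Let (r_m)_{m≥1} be the sequence of positive real numbers defined by r₁ = 1/(2√π), r₂ = r₁·√((π+2)/(2π)), and, for m ≥ 3, r_m² = ((π+2)/(2π))·r_{m−1}² + (1/π)·(∑_{j=1}^{m−2} r_j)·r_{m−1}. Then r_m² → ∞ (hence r_m → ∞) as m → ∞. -/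
open Real Filter

/-- For the sequence of radii `r_m` (with `r₁ = 1/(2√π)`,
`r₂ = r₁√((π+2)/(2π))` and `r_m² = ((π+2)/(2π))r_{m-1}² + (1/π)(∑_{j=1}^{m-2} r_j)r_{m-1}`
for `m ≥ 3`), one has `r_m² → ∞` (hence `r_m → ∞`) as `m → ∞`. -/
theorem stmt_18 (r : ℕ → ℝ) (hpos : ∀ m, 1 ≤ m → 0 < r m)
    (h1 : r 1 = 1 / (2 * Real.sqrt π))
    (h2 : r 2 = r 1 * Real.sqrt ((π + 2) / (2 * π)))
    (hrec : ∀ m, 3 ≤ m → (r m) ^ 2 =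
      ((π + 2) / (2 * π)) * (r (m - 1)) ^ 2
        + (1 / π) * (∑ j ∈ Finset.Icc 1 (m - 2), r j) * r (m - 1)) :
    Tendsto (fun m => (r m) ^ 2) atTop atTop ∧ Tendsto r atTop atTop := by
  have hpi := Real.pi_pos
  have hb : 0 < 1 / π := by positivity
  have ha : 0 < (π + 2) / (2 * π) := by positivity
  obtain ⟨d, hd, hd1, hd2, hd3⟩ :
      ∃ d : ℝ, 0 < d ∧ d ≤ r 1 ∧ d ≤ r 2 ∧ d ≤ 1 / π * r 1 := by
    have p1 := hpos 1 le_rfl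
    have p2 := hpos 2 (by norm_num)
    refine ⟨min (r 1) (min (r 2) (1 / π * r 1)), ?_, min_le_left _ _,
      (min_le_right _ _).trans (min_le_left _ _), (min_le_right _ _).trans (min_le_right _ _)⟩
    exact lt_min p1 (lt_min p2 (mul_pos hb p1))
  have hrec' : ∀ n, 1 ≤ n → 1 / π * (∑ j ∈ Finset.Icc 1 n, r j) * r (n + 1) ≤ r (n + 2) ^ 2 := by
    intro n hn
    have h := hrec (n + 2) (by omega)
    rw [show n + 2 - 1 = n + 1 by omega, show n + 2 - 2 = n by omega] at h
    have : 0 ≤ (π + 2) / (2 * π) * r (n + 1) ^ 2 := by positivity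
    linarith
  have hlow : ∀ n, d ≤ r (n + 1) := by
    intro n
    induction n with
    | zero => exact hd1
    | succ n ih =>
      rcases Nat.eq_zero_or_pos n with rfl | hn
      · exact hd2
      · have h := hrec' n hn
        have hS : r 1 ≤ ∑ j ∈ Finset.Icc 1 n, r j :=
          Finset.single_le_sum (f := r)
            (fun j hj => (hpos j (Finset.mem_Icc.1 hj).1).le) (Finset.mem_Icc.2 ⟨le_rfl, hn⟩)
        have h3 : d ≤ 1 / π * ∑ j ∈ Finset.Icc 1 n, r j :=
          hd3.trans (mul_le_mul_of_nonneg_left hS hb.le)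
        have h4 : d * d ≤ (1 / π * ∑ j ∈ Finset.Icc 1 n, r j) * r (n + 1) :=
          mul_le_mul h3 ih hd.le (hd.le.trans h3)
        exact (pow_le_pow_iff_left₀ hd.le (hpos _ (by omega)).le two_ne_zero).1 (by rw [sq d]; exact h4.trans h)
  have hsum : ∀ n : ℕ, n * d ≤ ∑ j ∈ Finset.Icc 1 n, r j := by
    intro n
    have h := Finset.card_nsmul_le_sum (Finset.Icc 1 n) r d (by
      intro j hj
      obtain ⟨k, rfl⟩ := Nat.exists_eq_add_of_le' (Finset.mem_Icc.1 hj).1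
      exact hlow k)
    simpa using h
  have hmain : ∀ n : ℕ, 1 / π * d * d * n ≤ r (n + 2) ^ 2 := by
    intro n
    rcases Nat.eq_zero_or_pos n with rfl | hn
    · simp; positivity
    · have h3 : 1 / π * (n * d) ≤ 1 / π * ∑ j ∈ Finset.Icc 1 n, r j :=
        mul_le_mul_of_nonneg_left (hsum n) hb.le
      have h4 := mul_le_mul h3 (hlow n) hd.le (le_trans (by positivity) h3)
      have := hrec' n hn
      linarith
  have hT : Tendsto (fun m => (r m) ^ 2) atTop atTop := by
    rw [← tendsto_add_atTop_iff_nat 2]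
    exact tendsto_atTop_mono hmain
      (tendsto_natCast_atTop_atTop.const_mul_atTop (by positivity))
  refine ⟨hT, ?_⟩
  refine (Real.tendsto_sqrt_atTop.comp hT).congr' ?_
  filter_upwards [eventually_ge_atTop 1] with m hm
  exact Real.sqrt_sq (hpos m hm).le
end

section
/- Let (r_m)_{m≥1} be the sequence of positive real numbers defined by r₁ = 1/(2√π), r₂ = r₁·√((π+2)/(2π)), and, for m ≥ 3, r_m² = ((π+2)/(2π))·r_{m−1}² + (1/π)·(∑_{j=1}^{m−2} r_j)·r_{m−1}. Then for every m ≥ 4, 25·(∑_{j=1}^{m−2} r_j)² > π²·r_{m−1}²; equivalently, 5·(r₁ + r₂ + … + r_{m−2}) > π·r_{m−1}. -/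
open Real

/-- For the sequence of radii `r_m` (with `r₁ = 1/(2√π)`,
`r₂ = r₁√((π+2)/(2π))` and `r_m² = ((π+2)/(2π))r_{m-1}² + (1/π)(∑_{j=1}^{m-2} r_j)r_{m-1}`
for `m ≥ 3`), one has `25(∑_{j=1}^{m-2} r_j)² > π² r_{m-1}²`, equivalently
`5(r₁ + … + r_{m-2}) > π r_{m-1}`, for all `m ≥ 4`. -/
theorem stmt_19 (r : ℕ → ℝ) (hpos : ∀ m, 1 ≤ m → 0 < r m)
    (h1 : r 1 = 1 / (2 * Real.sqrt π))
    (h2 : r 2 = r 1 * Real.sqrt ((π + 2) / (2 * π)))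
    (hrec : ∀ m, 3 ≤ m → (r m) ^ 2 =
      ((π + 2) / (2 * π)) * (r (m - 1)) ^ 2
        + (1 / π) * (∑ j ∈ Finset.Icc 1 (m - 2), r j) * r (m - 1)) :
    ∀ m, 4 ≤ m →
      25 * (∑ j ∈ Finset.Icc 1 (m - 2), r j) ^ 2 > π ^ 2 * (r (m - 1)) ^ 2 ∧
      5 * (∑ j ∈ Finset.Icc 1 (m - 2), r j) > π * r (m - 1) := by
  intro m hm
  obtain ⟨k, rfl⟩ : ∃ k, m = k + 4 := ⟨m - 4, by omega⟩
  have hr := hrec (k + 3) (by omega)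
  simp only [show k + 3 - 1 = k + 2 by omega, show k + 3 - 2 = k + 1 by omega] at hr
  simp only [show k + 4 - 1 = k + 3 by omega, show k + 4 - 2 = k + 2 by omega]
  have hS : ∑ j ∈ Finset.Icc 1 (k + 2), r j = ∑ j ∈ Finset.Icc 1 (k + 1), r j + r (k + 2) :=
    Finset.sum_Icc_succ_top (by omega) _
  have hS0 : 0 ≤ ∑ j ∈ Finset.Icc 1 (k + 1), r j :=
    Finset.sum_nonneg fun j hj => (hpos j (Finset.mem_Icc.1 hj).1).le
  have hx := hpos (k + 2) (by omega)
  have hy := hpos (k + 3) (by omega)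
  rw [hS]
  generalize ∑ j ∈ Finset.Icc 1 (k + 1), r j = S at *
  generalize r (k + 2) = x at *
  generalize r (k + 3) = y at *
  have hp := Real.pi_pos
  have hp4 := Real.pi_lt_four
  have e : π ^ 2 * y ^ 2 = π * (π + 2) / 2 * x ^ 2 + π * (S * x) := by
    rw [hr]; field_simp
  have b1 : π * (π + 2) / 2 ≤ 12 := by nlinarith
  have b2 : π * (π + 2) / 2 * x ^ 2 ≤ 12 * x ^ 2 := by gcongr
  have b3 : π * (S * x) ≤ 4 * (S * x) := by gcongr
  have hSx : 0 ≤ S * x := by positivity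
  have hx2 : 0 < x ^ 2 := by positivity
  have main : 25 * (S + x) ^ 2 > π ^ 2 * y ^ 2 := by
    rw [e]; nlinarith [sq_nonneg S]
  refine ⟨main, ?_⟩
  have : (π * y) ^ 2 < (5 * (S + x)) ^ 2 := by nlinarith
  exact lt_of_pow_lt_pow_left₀ 2 (by positivity) this
end
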